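/- Let (fⱼ)_{j∈ℕ} and f be functions from ℝ³ to ℝ such that x ↦ ‖x‖²/2 − fⱼ(x) is convex for every j, x ↦ ‖x‖²/2 − f(x) is convex, and fⱼ(x) → f(x) for every x ∈ ℝ³. Then there exists a set D ⊆ ℝ³ whose complement ℝ³ \ D has Lebesgue measure zero such that f and every fⱼ are differentiable at all points of D, and for every ξ ∈ D: (a) ∇fⱼ(ξ) → ∇f(ξ) as j → ∞, and (b) for every l ∈ {1,2,3} and every j the second partial derivative ∂ₗ² fⱼ(ξ) exists and liminf_{j→∞} ( − ∂ₗ² fⱼ(ξ) ) < ∞. -/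

import Mathlib

open Filter Asymptotics

/-!
Everything is proved for the convex functions `gn j = ‖·‖² / 2 - fn j`, whose pointwise limit is
`g = ‖·‖² / 2 - f`, and then transferred through the smooth quadratic part.

Differentiability almost everywhere is Rademacher's theorem (`ConvexOn.ae_differentiableAt`), and
at a common point of differentiability the gradients converge because the derivative of a convex
function is squeezed between its difference quotients (`tendsto_fderiv_of_convexOn`).

For the second derivatives, restrict to a line. The right derivative of a convex function of one
variable is monotone, so it is differentiable almost everywhere, and at such points the function has
a second-order Taylor expansion (`ConvexOn.hasPeanoSecondDeriv`). The second derivatives are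
nonnegative, and their integrals over a bounded interval are bounded by increments of right
derivatives, which are bounded in `j` since the functions converge. Fatou's lemma then makes the
lower limit of the second derivatives finite almost everywhere
(`ae_liminf_deriv_rightDeriv_lt_top`). Passing from lines to the whole space is Fubini's theorem
(`ae_hasPeanoSecondDeriv`). It needs the good set to be Borel, which is why the second derivative is
expressed as an upper limit of symmetric second differences (`secondDeriv`,
`measurableSet_hasPeanoSecondDeriv`).
-/

/-! ### Peano second derivatives of convex functions on the line -/

/-- `φ` has second derivative `d` at `0` in the Peano sense, i.e. a second-order Taylor expansion
with remainder `o(t²)`. The first-order coefficient is `deriv φ 0`. -/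
def HasPeanoSecondDeriv (φ : ℝ → ℝ) (d : ℝ) : Prop :=
  (fun t : ℝ => φ t - φ 0 - t * deriv φ 0 - d * t ^ 2 / 2) =o[nhds 0] fun t : ℝ => t ^ 2

/-- The `n`-th symmetric second difference quotient of `g` at `x` in direction `e`, with step
`1 / (n + 1)`. -/
noncomputable def secondDiff {E : Type*} [AddCommGroup E] [Module ℝ E] (g : E → ℝ) (e x : E)
    (n : ℕ) : ℝ :=
  ((n : ℝ) + 1) ^ 2 * (g (x + ((n : ℝ) + 1)⁻¹ • e) + g (x + (-((n : ℝ) + 1)⁻¹) • e) - 2 * g x)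

/-- The upper limit of the symmetric second difference quotients. It is Borel in `x` for continuous
`g`, and equals the Peano second derivative along `e` wherever that exists; as a real-valued
`limsup` it is a junk value where the quotients are unbounded. -/
noncomputable def secondDeriv {E : Type*} [AddCommGroup E] [Module ℝ E] (g : E → ℝ) (e x : E) :
    ℝ :=
  limsup (secondDiff g e x) atTop

/-- Mean value inequality behind the second-order expansion: if the right derivative `P` of `φ` is
within `ε |s - t|` of its affine approximation near `t`, then `φ` is within `ε (s - t)²` of the
corresponding quadratic polynomial. -/
theorem norm_taylor_le {φ P : ℝ → ℝ} (hc : Continuous φ)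
    (hP : ∀ s, HasDerivWithinAt φ (P s) (Set.Ici s) s) {t d ε δ : ℝ}
    (hδ : ∀ s, |s - t| ≤ δ → |P s - P t - d * (s - t)| ≤ ε * |s - t|) (hε : 0 ≤ ε) {s : ℝ}
    (hs : |s - t| ≤ δ) :
    |φ s - φ t - P t * (s - t) - d * (s - t) ^ 2 / 2| ≤ ε * (s - t) ^ 2 := by
  let h : ℝ → ℝ := fun u => φ u - P t * (u - t) - d * (u - t) ^ 2 / 2
  have hh : ∀ u, HasDerivWithinAt h (P u - P t - d * (u - t)) (Set.Ici u) u := by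
    intro u
    have h1 : HasDerivAt (fun u => P t * (u - t)) (P t * 1) u :=
      ((hasDerivAt_id u).sub_const t).const_mul _
    have h2 : HasDerivAt (fun u => d * (u - t) ^ 2 / 2)
        (d * (((2 : ℕ) : ℝ) * (u - t) ^ (2 - 1) * 1) / 2) u :=
      ((((hasDerivAt_id u).sub_const t).pow 2).const_mul d).div_const 2
    convert! ((hP u).sub h1.hasDerivWithinAt).sub h2.hasDerivWithinAt using 1
    simp; ring
  have hhc : Continuous h := by fun_prop
  have key : ∀ a b, a ≤ b → (∀ u ∈ Set.Icc a b, |u - t| ≤ |s - t|) →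
      |h b - h a| ≤ ε * |s - t| * (b - a) := by
    intro a b hab hu
    refine norm_image_sub_le_of_norm_deriv_right_le_segment (f := h) hhc.continuousOn
      (fun u _ => hh u) (fun u hu' => ?_) b ⟨hab, le_rfl⟩
    have := hu u ⟨hu'.1, hu'.2.le⟩
    exact (hδ u (this.trans hs)).trans (by gcongr)
  have e : φ s - φ t - P t * (s - t) - d * (s - t) ^ 2 / 2 = h s - h t := by
    simp only [h]; ring
  rw [e]
  rcases le_total t s with hts | hts
  · refine (key t s hts ?_).trans_eq ?_
    · intro u hu
      rw [abs_of_nonneg (by linarith [hu.1]), abs_of_nonneg (by linarith)]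
      linarith [hu.2]
    · rw [abs_of_nonneg (by linarith)]; ring
  · rw [abs_sub_comm]
    refine (key s t hts ?_).trans_eq ?_
    · intro u hu
      rw [abs_of_nonpos (by linarith [hu.2]), abs_of_nonpos (by linarith)]
      linarith [hu.1]
    · rw [abs_of_nonpos (by linarith)]; ring

/-- A convex function has a Peano second derivative at each point where its right derivative is
differentiable. -/
theorem ConvexOn.hasPeanoSecondDeriv {φ : ℝ → ℝ} (hφ : ConvexOn ℝ Set.univ φ) {t : ℝ}
    (ht : DifferentiableAt ℝ (fun s => derivWithin φ (Set.Ioi s) s) t) :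
    HasPeanoSecondDeriv (fun s => φ (t + s))
      (deriv (fun s => derivWithin φ (Set.Ioi s) s) t) := by
  set P : ℝ → ℝ := fun s => derivWithin φ (Set.Ioi s) s with hPdef
  set d := deriv P t
  have hc : Continuous φ := hφ.locallyLipschitz.continuous
  have hP : ∀ s, HasDerivWithinAt φ (P s) (Set.Ici s) s := fun s =>
    (hφ.hasDerivWithinAt_rightDeriv_of_mem_interior (by simp)).Ici_of_Ioi
  have hd : HasDerivAt P d t := ht.hasDerivAt
  have hO : (fun s => φ s - φ t - P t * (s - t) - d * (s - t) ^ 2 / 2) =o[nhds t]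
      fun s => (s - t) ^ 2 := by
    rw [isLittleO_iff]
    intro ε hε
    have h1 := (isLittleO_iff.1 hd.isLittleO) hε
    obtain ⟨δ, hδ0, hδ⟩ := Metric.eventually_nhds_iff.1 h1
    filter_upwards [Metric.ball_mem_nhds t (half_pos hδ0)] with s hs
    have hs' : |s - t| ≤ δ / 2 := by
      rw [Metric.mem_ball, Real.dist_eq] at hs; exact hs.le
    have := norm_taylor_le hc hP (t := t) (d := d) (ε := ε) (δ := δ / 2) (fun u hu => by
      have := hδ (y := u) (by rw [Real.dist_eq]; linarith)
      simpa [mul_comm d] using this) hε.le hs'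
    simpa using this
  have hO0 : (fun s => φ (t + s) - φ t - P t * s - d * s ^ 2 / 2) =o[nhds 0]
      fun s : ℝ => s ^ 2 := by
    have hk : Tendsto (fun s : ℝ => t + s) (nhds 0) (nhds t) := by
      have : Continuous fun s : ℝ => t + s := by fun_prop
      simpa using this.tendsto 0
    simpa [Function.comp_def] using hO.comp_tendsto hk
  -- The expansion already gives two-sided differentiability at `t`.
  have hder : HasDerivAt (fun s => φ (t + s)) (P t) 0 := by
    rw [hasDerivAt_iff_isLittleO]
    have hsq : (fun s : ℝ => s ^ 2) =o[nhds 0] fun s : ℝ => s := by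
      simpa using isLittleO_pow_pow (𝕜 := ℝ) (m := 1) (n := 2) (by norm_num)
    have h2 : (fun s : ℝ => d * s ^ 2 / 2) =o[nhds 0] fun s : ℝ => s := by
      have := hsq.const_mul_left (d / 2)
      exact this.congr_left (fun s => by ring)
    have := (hO0.trans hsq).add h2
    refine (this.congr_left fun s => ?_).congr_right fun s => ?_
    · simp; ring
    · simp
  unfold HasPeanoSecondDeriv
  rw [hder.deriv]
  refine hO0.congr_left fun s => ?_
  simp; ring

theorem HasPeanoSecondDeriv.tendsto_secondDiff {E : Type*} [AddCommGroup E] [Module ℝ E]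
    {g : E → ℝ} {e x : E} {d : ℝ} (h : HasPeanoSecondDeriv (fun t : ℝ => g (x + t • e)) d) :
    Tendsto (secondDiff g e x) atTop (nhds d) := by
  unfold HasPeanoSecondDeriv at h
  set p := deriv (fun t : ℝ => g (x + t • e)) 0
  have hu : Tendsto (fun n : ℕ => ((n : ℝ) + 1)⁻¹) atTop (nhds 0) := by
    simpa using tendsto_one_div_add_atTop_nhds_zero_nat (𝕜 := ℝ)
  have hu' : Tendsto (fun n : ℕ => -((n : ℝ) + 1)⁻¹) atTop (nhds 0) := by simpa using hu.neg
  have h1 := (h.comp_tendsto hu).tendsto_div_nhds_zero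
  have h2 := (h.comp_tendsto hu').tendsto_div_nhds_zero
  have h3 := (h1.add h2).add_const d
  simp only [add_zero, zero_add] at h3
  refine h3.congr fun n => ?_
  have : (n : ℝ) + 1 ≠ 0 := by positivity
  simp only [secondDiff, Function.comp, zero_smul, add_zero]
  field_simp
  ring

theorem HasPeanoSecondDeriv.secondDeriv_eq {E : Type*} [AddCommGroup E] [Module ℝ E]
    {g : E → ℝ} {e x : E} {d : ℝ} (h : HasPeanoSecondDeriv (fun t : ℝ => g (x + t • e)) d) :
    secondDeriv g e x = d :=
  h.tendsto_secondDiff.limsup_eq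

/-! ### Measurability -/

section Meas
variable {E : Type*} [NormedAddCommGroup E] [NormedSpace ℝ E] [MeasurableSpace E] [BorelSpace E]

theorem measurable_secondDeriv {g : E → ℝ} (hg : Continuous g) (e : E) :
    Measurable (secondDeriv g e) := by
  refine Measurable.limsup (f := fun n x => secondDiff g e x n) fun n => ?_
  unfold secondDiff
  exact Continuous.measurable (by fun_prop)

/-- For continuous `φ` the little-o condition may be tested on countably many steps and tolerances;
this is what makes the set of points with a second derivative measurable. -/
theorem hasPeanoSecondDeriv_iff {φ : ℝ → ℝ} (hφ : Continuous φ) {d : ℝ} :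
    HasPeanoSecondDeriv φ d ↔ ∀ k : ℕ, ∃ m : ℕ, ∀ q : ℚ, |(q : ℝ)| < ((m : ℝ) + 1)⁻¹ →
      |φ q - φ 0 - q * deriv φ 0 - d * q ^ 2 / 2| ≤ ((k : ℝ) + 1)⁻¹ * (q : ℝ) ^ 2 := by
  unfold HasPeanoSecondDeriv
  rw [isLittleO_iff]
  constructor
  · intro h k
    obtain ⟨δ, hδ0, hδ⟩ := Metric.eventually_nhds_iff.1 (@h ((k : ℝ) + 1)⁻¹ (by positivity))
    obtain ⟨m, hm⟩ := exists_nat_one_div_lt hδ0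
    refine ⟨m, fun q hq => ?_⟩
    have := hδ (y := q) (by rw [Real.dist_eq, sub_zero]; rw [one_div] at hm; linarith)
    simpa only [Real.norm_eq_abs, abs_pow, sq_abs] using this
  · intro h c hc
    obtain ⟨k, hk⟩ := exists_nat_one_div_lt hc
    rw [one_div] at hk
    obtain ⟨m, hm⟩ := h k
    have hm0 : (0 : ℝ) < ((m : ℝ) + 1)⁻¹ := by positivity
    filter_upwards [Metric.ball_mem_nhds (0 : ℝ) hm0] with t ht
    have hcl : IsClosed {t : ℝ | |φ t - φ 0 - t * deriv φ 0 - d * t ^ 2 / 2| ≤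
        ((k : ℝ) + 1)⁻¹ * t ^ 2} := isClosed_le (by fun_prop) (by fun_prop)
    have h1 := (Rat.denseRange_cast (𝕜 := ℝ)).open_subset_closure_inter Metric.isOpen_ball ht
    have h2 : t ∈ {t : ℝ | |φ t - φ 0 - t * deriv φ 0 - d * t ^ 2 / 2| ≤
        ((k : ℝ) + 1)⁻¹ * t ^ 2} := by
      refine hcl.closure_subset_iff.2 ?_ h1
      rintro _ ⟨hq, q, rfl⟩
      exact hm q (by simpa only [Metric.mem_ball, Real.dist_eq, sub_zero] using hq)
    have h3 : ((k : ℝ) + 1)⁻¹ * t ^ 2 ≤ c * t ^ 2 := by gcongr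
    simpa using le_trans h2 h3

theorem measurableSet_hasPeanoSecondDeriv {g : E → ℝ} (hg : Continuous g) (e : E) :
    MeasurableSet {x | HasPeanoSecondDeriv (fun t : ℝ => g (x + t • e)) (secondDeriv g e x)} := by
  have hc : ∀ x, Continuous (fun t : ℝ => g (x + t • e)) := fun x => by fun_prop
  simp only [hasPeanoSecondDeriv_iff (hc _)]
  have hd := measurable_secondDeriv hg e
  have hp : Measurable fun x => deriv (fun t : ℝ => g (x + t • e)) 0 :=
    measurable_lineDeriv (𝕜 := ℝ) (v := e) hg
  simp only [Set.ofPred_forall, Set.ofPred_exists]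
  refine .iInter fun k => .iUnion fun m => .iInter fun q => .iInter fun _ => ?_
  refine measurableSet_le ?_ measurable_const
  have h0 : ∀ r : ℝ, Measurable fun x => g (x + r • e) := fun r =>
    Continuous.measurable (by fun_prop)
  exact _root_.continuous_abs.measurable.comp
    ((((h0 _).sub (h0 _)).sub (hp.const_mul _)).sub ((hd.mul_const _).div_const _))
end Meas

/-! ### Finiteness of the lower limit -/

open MeasureTheory in
/-- Fatou's lemma on `(-N, N]`: the integral of the second derivative of `φn j` is at most the
increment of its right derivative, which is controlled by difference quotients of `φn j`, and these
converge. -/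
theorem ae_liminf_deriv_rightDeriv_lt_top {φn : ℕ → ℝ → ℝ} {φ : ℝ → ℝ}
    (hφ : ∀ j, ConvexOn ℝ Set.univ (φn j))
    (hlim : ∀ t, Tendsto (fun j => φn j t) atTop (nhds (φ t))) :
    ∀ᵐ t : ℝ, liminf (fun j => ENNReal.ofReal
      (deriv (fun s => derivWithin (φn j) (Set.Ioi s) s) t)) atTop < ⊤ := by
  set P : ℕ → ℝ → ℝ := fun j s => derivWithin (φn j) (Set.Ioi s) s with hP
  have hmono : ∀ j, Monotone (P j) := fun j => by
    simpa [monotoneOn_univ] using (hφ j).monotoneOn_rightDeriv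
  have hmeas : ∀ j, Measurable fun t => ENNReal.ofReal (deriv (P j) t) := fun j =>
    (measurable_deriv _).ennreal_ofReal
  have hnn : ∀ j t, 0 ≤ deriv (P j) t := fun j t => (hmono j).deriv_nonneg
  have hint : ∀ j (a b : ℝ), a ≤ b → ∫⁻ t in Set.Ioc a b, ENNReal.ofReal (deriv (P j) t) ≤
      ENNReal.ofReal (P j b - P j a) := by
    intro j a b hab
    have h1 := ((hmono j).monotoneOn (Set.uIcc a b)).intervalIntegrable_deriv
    have h2 := ((hmono j).monotoneOn (Set.uIcc a b)).intervalIntegral_deriv_mem_uIcc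
    rw [intervalIntegrable_iff_integrableOn_Ioc_of_le hab] at h1
    rw [intervalIntegral.integral_of_le hab,
      Set.uIcc_of_le (by linarith [hmono j hab])] at h2
    rw [← ofReal_integral_eq_lintegral_ofReal h1 (ae_of_all _ (hnn j))]
    exact ENNReal.ofReal_le_ofReal h2.2
  have hPub : ∀ j (b : ℝ), P j b ≤ φn j (b + 1) - φn j b := by
    intro j b
    have := (hφ j).rightDeriv_le_slope_of_mem_interior (x := b) (y := b + 1)
      (by simp) (by simp) (by linarith)
    simpa [slope_def_field] using this
  have hPlb : ∀ j (a : ℝ), φn j a - φn j (a - 1) ≤ P j a := by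
    intro j a
    have h1 := (hφ j).slope_le_leftDeriv_of_mem_interior (x := a - 1) (y := a)
      (by simp) (by simp) (by linarith)
    have h2 := (hφ j).leftDeriv_le_rightDeriv_of_mem_interior (x := a) (by simp)
    have := h1.trans h2
    simpa [slope_def_field] using this
  have hloc : ∀ N : ℕ, ∀ᵐ t ∂(volume.restrict (Set.Ioc (-(N : ℝ)) N)),
      liminf (fun j => ENNReal.ofReal (deriv (P j) t)) atTop < ⊤ := by
    intro N
    have hN : -(N : ℝ) ≤ N := by linarith [Nat.cast_nonneg (α := ℝ) N]
    refine ae_lt_top (Measurable.liminf hmeas) (ne_of_lt ?_)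
    refine (lintegral_liminf_le hmeas).trans_lt ?_
    set B : ℕ → ℝ := fun j => (φn j (N + 1) - φn j N) - (φn j (-N) - φn j (-N - 1))
    have hB : Tendsto (fun j => ENNReal.ofReal (B j)) atTop (nhds (ENNReal.ofReal
        ((φ (N + 1) - φ N) - (φ (-N) - φ (-N - 1))))) :=
      ENNReal.tendsto_ofReal (((hlim _).sub (hlim _)).sub ((hlim _).sub (hlim _)))
    calc liminf (fun j => ∫⁻ t in Set.Ioc (-(N : ℝ)) N, ENNReal.ofReal (deriv (P j) t)) atTop
        ≤ liminf (fun j => ENNReal.ofReal (B j)) atTop := by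
          refine liminf_le_liminf (Eventually.of_forall fun j => (hint j _ _ hN).trans ?_)
          refine ENNReal.ofReal_le_ofReal ?_
          have := hPub j N
          have := hPlb j (-N)
          simp only [B]; linarith
      _ < ⊤ := by rw [hB.liminf_eq]; exact ENNReal.ofReal_lt_top
  have hU : (⋃ N : ℕ, Set.Ioc (-(N : ℝ)) N) = Set.univ := by
    refine Set.eq_univ_of_forall fun t => Set.mem_iUnion.2 ?_
    obtain ⟨N, hN⟩ := exists_nat_gt |t|
    exact ⟨N, (abs_lt.1 hN).1, (abs_lt.1 hN).2.le⟩
  have := (ae_restrict_iUnion_iff (μ := volume) (fun N : ℕ => Set.Ioc (-(N : ℝ)) N)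
    (fun t => liminf (fun j => ENNReal.ofReal (deriv (P j) t)) atTop < ⊤)).2 hloc
  rwa [hU, Measure.restrict_univ] at this

/-! ### From lines to the whole space -/

theorem ConvexOn.comp_line {E : Type*} [NormedAddCommGroup E] [NormedSpace ℝ E]
    {g : E → ℝ} (hg : ConvexOn ℝ Set.univ g) (y e : E) :
    ConvexOn ℝ Set.univ fun t : ℝ => g (y + t • e) := by
  have := hg.comp_affineMap (AffineMap.lineMap y (y + e) : ℝ →ᵃ[ℝ] E)
  simpa [Function.comp_def, AffineMap.lineMap_apply, add_comm] using this

section Ae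
open MeasureTheory
variable {E : Type*} [NormedAddCommGroup E] [NormedSpace ℝ E] [FiniteDimensional ℝ E]
  [MeasurableSpace E] [BorelSpace E]

/-- Fubini along the lines parallel to `e` transfers the one-dimensional facts to `E`. -/
theorem ae_hasPeanoSecondDeriv {gn : ℕ → E → ℝ} {g : E → ℝ}
    (hgn : ∀ j, ConvexOn ℝ Set.univ (gn j))
    (hlim : ∀ x, Tendsto (fun j => gn j x) atTop (nhds (g x)))
    (μ : Measure E) [μ.IsAddHaarMeasure] (e : E) :
    ∀ᵐ x ∂μ, (∀ j, HasPeanoSecondDeriv (fun t : ℝ => gn j (x + t • e)) (secondDeriv (gn j) e x)) ∧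
      liminf (fun j => ENNReal.ofReal (secondDeriv (gn j) e x)) atTop < ⊤ := by
  have hc : ∀ j, Continuous (gn j) := fun j => (hgn j).locallyLipschitz.continuous
  let L : ℝ →ₗ[ℝ] E := LinearMap.toSpanSingleton ℝ E e
  have hS : MeasurableSet {x | (∀ j, HasPeanoSecondDeriv (fun t : ℝ => gn j (x + t • e))
      (secondDeriv (gn j) e x)) ∧
      liminf (fun j => ENNReal.ofReal (secondDeriv (gn j) e x)) atTop < ⊤} := by
    refine MeasurableSet.inter ?_ ?_
    · have h := MeasurableSet.iInter fun j => measurableSet_hasPeanoSecondDeriv (hc j) e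
      rwa [← Set.ofPred_forall] at h
    · exact measurableSet_lt (Measurable.liminf fun j =>
        (measurable_secondDeriv (hc j) e).ennreal_ofReal) measurable_const
  refine ae_mem_of_ae_add_linearMap_mem L volume μ hS fun y => ?_
  have hφ : ∀ j, ConvexOn ℝ Set.univ fun t : ℝ => gn j (y + t • e) := fun j =>
    (hgn j).comp_line y e
  have hd : ∀ j, ∀ᵐ t : ℝ, DifferentiableAt ℝ
      (fun s => derivWithin (fun t : ℝ => gn j (y + t • e)) (Set.Ioi s) s) t := fun j =>
    Monotone.ae_differentiableAt (by
      simpa [monotoneOn_univ] using (hφ j).monotoneOn_rightDeriv)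
  filter_upwards [ae_all_iff.2 hd, ae_liminf_deriv_rightDeriv_lt_top hφ (fun t => hlim _)]
    with t ht hlt
  have hP : ∀ j, HasPeanoSecondDeriv (fun s : ℝ => gn j ((y + L t) + s • e))
      (deriv (fun s => derivWithin (fun t : ℝ => gn j (y + t • e)) (Set.Ioi s) s) t) := by
    intro j
    have := (hφ j).hasPeanoSecondDeriv (ht j)
    simpa [L, add_smul, add_assoc] using this
  refine ⟨fun j => ?_, ?_⟩
  · rw [(hP j).secondDeriv_eq]; exact hP j
  · simpa only [(hP _).secondDeriv_eq] using hlt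

/-- Rademacher's theorem for convex functions, which are locally Lipschitz. -/
theorem ConvexOn.ae_differentiableAt {g : E → ℝ} (hg : ConvexOn ℝ Set.univ g)
    (μ : Measure E) [μ.IsAddHaarMeasure] : ∀ᵐ x ∂μ, DifferentiableAt ℝ g x := by
  rw [ae_iff]
  refine measure_null_of_locally_null _ fun x _ => ?_
  obtain ⟨K, s, hs, hK⟩ := hg.locallyLipschitz x
  refine ⟨interior s ∩ {a | ¬ DifferentiableAt ℝ g a}, ?_, ?_⟩
  · rw [Set.inter_comm]
    exact inter_mem self_mem_nhdsWithin (mem_nhdsWithin_of_mem_nhds (interior_mem_nhds.2 hs))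
  · have h1 : ∀ᵐ y ∂μ, y ∈ interior s → DifferentiableAt ℝ g y := by
      filter_upwards [hK.ae_differentiableWithinAt_of_mem (μ := μ)] with y hy hys
      exact (hy (interior_subset hys)).differentiableAt (mem_interior_iff_mem_nhds.1 hys)
    rw [ae_iff] at h1
    refine measure_mono_null ?_ h1
    rintro y ⟨h2, h3⟩ h4
    exact h3 (h4 h2)

end Ae

/-! ### Convergence of gradients -/

/-- Convex functions converging pointwise have converging derivatives wherever all of them, and the
limit, are differentiable: `fderiv (gn j) x v` is at most the difference quotient of `gn j` along
`v`, which gives the upper bound; applying it to `-v` gives the lower one. -/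
theorem tendsto_fderiv_of_convexOn {E : Type*} [NormedAddCommGroup E] [NormedSpace ℝ E]
    {gn : ℕ → E → ℝ} {g : E → ℝ} (hgn : ∀ j, ConvexOn ℝ Set.univ (gn j))
    (hlim : ∀ x, Tendsto (fun j => gn j x) atTop (nhds (g x))) {x : E}
    (hd : ∀ j, DifferentiableAt ℝ (gn j) x) (hd' : DifferentiableAt ℝ g x) (v : E) :
    Tendsto (fun j => fderiv ℝ (gn j) x v) atTop (nhds (fderiv ℝ g x v)) := by
  have hline : ∀ {h : E → ℝ}, DifferentiableAt ℝ h x → ∀ v,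
      HasDerivAt (fun t : ℝ => h (x + t • v)) (fderiv ℝ h x v) 0 := fun hh v =>
    hh.hasFDerivAt.hasLineDerivAt v
  have key : ∀ v a, fderiv ℝ g x v < a → ∀ᶠ j in atTop, fderiv ℝ (gn j) x v < a := by
    intro v a ha
    have h1 := (hasDerivAt_iff_tendsto_slope.1 (hline hd' v)).mono_left
      (nhdsGT_le_nhdsNE (0 : ℝ))
    obtain ⟨t, ht, ht0⟩ := ((h1.eventually_lt_const ha).and self_mem_nhdsWithin).exists
    have h2 : Tendsto (fun j => slope (fun t : ℝ => gn j (x + t • v)) 0 t) atTop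
        (nhds (slope (fun t : ℝ => g (x + t • v)) 0 t)) := by
      simp only [slope_def_field]
      exact ((hlim _).sub (hlim _)).div_const _
    filter_upwards [h2.eventually_lt_const ht] with j hj
    exact (((hgn j).comp_line x v).le_slope_of_hasDerivAt (by simp) (by simp) ht0
      (hline (hd j) v)).trans_lt hj
  refine tendsto_order.2 ⟨fun a ha => ?_, fun a ha => key v a ha⟩
  filter_upwards [key (-v) (-a) (by simpa using ha)] with j hj
  simpa using hj

/-- Existence of the second partial derivative `∂ₗ² fⱼ(ξ)` is formalized in the
(Alexandrov/Peano) sense of a second-order Taylor expansion along the `l`-th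
coordinate line. -/
theorem stmt9 (f : EuclideanSpace ℝ (Fin 3) → ℝ)
    (fn : ℕ → EuclideanSpace ℝ (Fin 3) → ℝ)
    (hf : ConvexOn ℝ Set.univ fun x => ‖x‖ ^ 2 / 2 - f x)
    (hfn : ∀ j, ConvexOn ℝ Set.univ fun x => ‖x‖ ^ 2 / 2 - fn j x)
    (hlim : ∀ x, Tendsto (fun j => fn j x) atTop (nhds (f x))) :
    ∃ D : Set (EuclideanSpace ℝ (Fin 3)), MeasureTheory.volume Dᶜ = 0 ∧
      ∀ ξ ∈ D,
        DifferentiableAt ℝ f ξ ∧ (∀ j, DifferentiableAt ℝ (fn j) ξ) ∧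
        Tendsto (fun j => gradient (fn j) ξ) atTop (nhds (gradient f ξ)) ∧
        ∀ l : Fin 3, ∃ d : ℕ → ℝ,
          (∀ j,
            (fun t : ℝ => fn j (ξ + t • EuclideanSpace.single l (1 : ℝ)) - fn j ξ -
                t * deriv (fun s : ℝ => fn j (ξ + s • EuclideanSpace.single l (1 : ℝ))) 0 -
                d j * t ^ 2 / 2)
              =o[nhds 0] fun t : ℝ => t ^ 2) ∧
          Filter.liminf (fun j => ((-(d j) : ℝ) : EReal)) atTop < ⊤ := by
  set g : EuclideanSpace ℝ (Fin 3) → ℝ := fun x => ‖x‖ ^ 2 / 2 - f x with hg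
  set gn : ℕ → EuclideanSpace ℝ (Fin 3) → ℝ := fun j x => ‖x‖ ^ 2 / 2 - fn j x with hgn
  have hglim : ∀ x, Tendsto (fun j => gn j x) atTop (nhds (g x)) := fun x =>
    (hlim x).const_sub _
  have hae := ((hf.ae_differentiableAt MeasureTheory.volume).and
    (MeasureTheory.ae_all_iff.2 fun j => (hfn j).ae_differentiableAt MeasureTheory.volume)).and
    (MeasureTheory.ae_all_iff.2 fun l : Fin 3 => ae_hasPeanoSecondDeriv hfn hglim
      MeasureTheory.volume (EuclideanSpace.single l (1 : ℝ)))
  refine ⟨_, hae, ?_⟩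
  rintro ξ ⟨⟨hdg, hdgn⟩, hP⟩
  have hsq : DifferentiableAt ℝ (fun x : EuclideanSpace ℝ (Fin 3) => ‖x‖ ^ 2 / 2) ξ := by
    have h : DifferentiableAt ℝ (fun x : EuclideanSpace ℝ (Fin 3) => ‖x‖ ^ 2) ξ :=
      differentiableAt_id.norm_sq ℝ
    simpa only [div_eq_mul_inv] using h.mul_const (2 : ℝ)⁻¹
  have hfe : f = fun x => ‖x‖ ^ 2 / 2 - g x := by funext x; simp [hg]
  have hfne : ∀ j, fn j = fun x => ‖x‖ ^ 2 / 2 - gn j x := fun j => by funext x; simp [hgn]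
  have hdf : DifferentiableAt ℝ f ξ := by rw [hfe]; exact hsq.sub hdg
  have hdfn : ∀ j, DifferentiableAt ℝ (fn j) ξ := fun j => by
    rw [hfne j]; exact hsq.sub (hdgn j)
  refine ⟨hdf, hdfn, ?_, fun l => ?_⟩
  · have hgrad : ∀ (h : EuclideanSpace ℝ (Fin 3) → ℝ) (i : Fin 3),
        (gradient h ξ) i = fderiv ℝ h ξ (EuclideanSpace.single i 1) := by
      intro h i
      have := InnerProductSpace.toDual_symm_apply (𝕜 := ℝ)
        (x := EuclideanSpace.single i (1 : ℝ)) (y := fderiv ℝ h ξ)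
      rw [← this, EuclideanSpace.inner_single_right]
      simp [gradient]
    rw [(EuclideanSpace.equiv (Fin 3) ℝ).toHomeomorph.isInducing.tendsto_nhds_iff,
      tendsto_pi_nhds]
    intro i
    have e : ∀ j, fderiv ℝ (fn j) ξ = fderiv ℝ (fun x => ‖x‖ ^ 2 / 2) ξ - fderiv ℝ (gn j) ξ := by
      intro j; rw [hfne j]; exact fderiv_sub hsq (hdgn j)
    have e' : fderiv ℝ f ξ = fderiv ℝ (fun x => ‖x‖ ^ 2 / 2) ξ - fderiv ℝ g ξ := by
      rw [hfe]; exact fderiv_sub hsq hdg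
    have := (tendsto_fderiv_of_convexOn hfn hglim hdgn hdg
      (EuclideanSpace.single i 1)).const_sub
      (fderiv ℝ (fun x : EuclideanSpace ℝ (Fin 3) => ‖x‖ ^ 2 / 2) ξ (EuclideanSpace.single i 1))
    simpa [Function.comp_def, hgrad, e, e'] using this
  · obtain ⟨hP1, hP2⟩ := hP l
    set v : EuclideanSpace ℝ (Fin 3) := EuclideanSpace.single l 1
    have hv : ‖v‖ = 1 := by simp [v]
    -- Along the unit vector `v` the quadratic part has second derivative exactly `1`.
    refine ⟨fun j => 1 - secondDeriv (gn j) v ξ, fun j => ?_, ?_⟩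
    · have hN : ∀ t : ℝ, ‖ξ + t • v‖ ^ 2 / 2 = ‖ξ‖ ^ 2 / 2 + t * inner ℝ ξ v + t ^ 2 / 2 := by
        intro t
        rw [norm_add_sq_real, inner_smul_right, norm_smul, hv, mul_one, Real.norm_eq_abs, sq_abs]
        ring
      have hgd : HasDerivAt (fun t : ℝ => gn j (ξ + t • v))
          (deriv (fun t : ℝ => gn j (ξ + t • v)) 0) 0 :=
        ((hdgn j).hasFDerivAt.hasLineDerivAt v).differentiableAt.hasDerivAt
      have hder : deriv (fun s : ℝ => fn j (ξ + s • v)) 0 =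
          inner ℝ ξ v - deriv (fun t : ℝ => gn j (ξ + t • v)) 0 := by
        have h1 : HasDerivAt (fun t : ℝ => ‖ξ‖ ^ 2 / 2 + t * inner ℝ ξ v + t ^ 2 / 2)
            (inner ℝ ξ v) 0 := by
          have ha := ((hasDerivAt_id (0 : ℝ)).mul_const (inner ℝ ξ v)).const_add (‖ξ‖ ^ 2 / 2)
          have hb := ((hasDerivAt_id (0 : ℝ)).pow 2).div_const 2
          convert! ha.add hb using 1
          simp
        have h2 := h1.sub hgd
        rw [← h2.deriv]
        congr 1
        funext s
        simp only [Pi.sub_apply, ← hN, hgn]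
        ring
      have := (hP1 j)
      unfold HasPeanoSecondDeriv at this
      refine this.neg_left.congr_left fun t => ?_
      rw [hder]
      simp only [hgn, zero_smul, add_zero, hN]
      ring
    · obtain ⟨C, hC, hC'⟩ := ENNReal.lt_iff_exists_nnreal_btwn.1 hP2
      have hfr := frequently_lt_of_liminf_lt (by isBoundedDefault) hC
      refine (liminf_le_of_frequently_le' (x := ((C : ℝ) : EReal)) (hfr.mono fun j hj => ?_)).trans_lt
        (EReal.coe_lt_top _)
      have h1 : secondDeriv (gn j) v ξ < C := by
        rw [← ENNReal.ofReal_coe_nnreal] at hj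
        exact lt_of_not_ge fun h => hj.not_ge (ENNReal.ofReal_le_ofReal h)
      exact EReal.coe_le_coe_iff.2 (by linarith)
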